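/- arXiv:2404.03578 — 2 statements merged into one kernel-verified Lean document; each statement's English description precedes it below -/
import Mathlib

section
/- (Variance analysis across two distributions.) Let S be a nonempty finite set with |S| = S, H ≥ 0 a real number, α, β ≥ 0 real numbers, and let p, q ∈ Δ(S) satisfy |p(s) − q(s)| ≤ sqrt(p(s)·α) + β for every s ∈ S. Let f, g, v : S → ℝ satisfy 0 ≤ g(s) ≤ v(s) ≤ f(s) ≤ H for all s ∈ S. Then | Var_q[(f + g)/2] − Var_p[v] | ≤ 4H·E_p[f − g] + H²·( sqrt(S·α) + S·β ). -/
/-!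
Write `w = (f + g) / 2` and compare both variances with `Varp p w`.

*Change of distribution.* With `m = E_p[w]`, the variance under `q` is at most the second moment
around `m`, so `Var_q[w] - Var_p[w] ≤ ∑ (q - p) (w - m)² ≤ H² ∑ |q - p|`, and symmetrically
(`Varp_sub_le`). Cauchy–Schwarz and the hypothesis on `|p - q|` give
`∑ |p - q| ≤ √(|S| α) + |S| β` (`sum_abs_sub_le`).

*Change of function.* Under the fixed distribution `p`, both `E[w²] - E[v²]` and `E[w]² - E[v]²`
are at most `2H · E|w - v|` in absolute value, and `|w - v| ≤ f - g` since `w` and `v` both lie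
between `g` and `f` (`abs_Varp_sub_le`).
-/

open Finset

section Defs

variable {S : Type*} [Fintype S]

/-- `p` is a probability distribution on the finite set `S`. -/
def IsDist (p : S → ℝ) : Prop := (∀ s, 0 ≤ p s) ∧ ∑ s, p s = 1

/-- Expectation of `f` under `p`. -/
def Eexp (p f : S → ℝ) : ℝ := ∑ s, p s * f s

/-- Variance of `f` under `p`. -/
def Varp (p f : S → ℝ) : ℝ := Eexp p (fun s => (f s) ^ 2) - (Eexp p f) ^ 2

end Defs

lemma Eexp_mem_Icc {S : Type*} [Fintype S] {H : ℝ} {b w : S → ℝ} (hb : IsDist b)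
    (hw : ∀ s, 0 ≤ w s ∧ w s ≤ H) : 0 ≤ Eexp b w ∧ Eexp b w ≤ H := by
  refine ⟨Finset.sum_nonneg fun s _ => mul_nonneg (hb.1 s) (hw s).1, ?_⟩
  calc Eexp b w ≤ ∑ s, b s * H :=
        Finset.sum_le_sum fun s _ => mul_le_mul_of_nonneg_left (hw s).2 (hb.1 s)
    _ = H := by rw [← Finset.sum_mul, hb.2, one_mul]

/-- Huygens' formula: the second moment around `m` exceeds the variance by `(E[w] - m)²`. -/
lemma Varp_eq_moment {S : Type*} [Fintype S] {a : S → ℝ} (ha : IsDist a) (w : S → ℝ) (m : ℝ) :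
    Varp a w = ∑ s, a s * (w s - m) ^ 2 - (Eexp a w - m) ^ 2 := by
  have h : ∑ s, a s * (w s - m) ^ 2
      = Eexp a (fun s => (w s) ^ 2) - 2 * m * Eexp a w + m ^ 2 * ∑ s, a s := by
    simp only [Eexp, Finset.mul_sum, ← Finset.sum_sub_distrib, ← Finset.sum_add_distrib]
    exact Finset.sum_congr rfl fun s _ => by ring
  rw [h, ha.2, Varp]
  ring

lemma Varp_sub_le {S : Type*} [Fintype S] {H : ℝ} {a b w : S → ℝ} (ha : IsDist a)
    (hb : IsDist b) (hw : ∀ s, 0 ≤ w s ∧ w s ≤ H) :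
    Varp a w - Varp b w ≤ H ^ 2 * ∑ s, |a s - b s| := by
  obtain ⟨hm0, hmH⟩ := Eexp_mem_Icc hb hw
  rw [Varp_eq_moment ha w (Eexp b w), Varp_eq_moment hb w (Eexp b w)]
  have h : ∑ s, a s * (w s - Eexp b w) ^ 2 - ∑ s, b s * (w s - Eexp b w) ^ 2
      ≤ H ^ 2 * ∑ s, |a s - b s| := by
    rw [← Finset.sum_sub_distrib, Finset.mul_sum]
    refine Finset.sum_le_sum fun s _ => ?_
    have h1 : (w s - Eexp b w) ^ 2 ≤ H ^ 2 :=
      sq_le_sq' (by linarith [(hw s).1]) (by linarith [(hw s).2])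
    calc a s * (w s - Eexp b w) ^ 2 - b s * (w s - Eexp b w) ^ 2
        = (w s - Eexp b w) ^ 2 * (a s - b s) := by ring
      _ ≤ (w s - Eexp b w) ^ 2 * |a s - b s| :=
          mul_le_mul_of_nonneg_left (le_abs_self _) (sq_nonneg _)
      _ ≤ H ^ 2 * |a s - b s| := mul_le_mul_of_nonneg_right h1 (abs_nonneg _)
  nlinarith [sq_nonneg (Eexp a w - Eexp b w)]

lemma sum_abs_sub_le {S : Type*} [Fintype S] {α β : ℝ} (hα : 0 ≤ α) {p q : S → ℝ}
    (hp : IsDist p) (hpq : ∀ s, |p s - q s| ≤ Real.sqrt (p s * α) + β) :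
    ∑ s, |p s - q s| ≤ Real.sqrt (Fintype.card S * α) + Fintype.card S * β := by
  have h : ∑ s, Real.sqrt (p s * α) ≤ Real.sqrt (Fintype.card S * α) := by
    apply Real.le_sqrt_of_sq_le
    calc (∑ s, Real.sqrt (p s * α)) ^ 2
        ≤ Fintype.card S * ∑ s, Real.sqrt (p s * α) ^ 2 := sq_sum_le_card_mul_sum_sq
      _ = Fintype.card S * ∑ s, p s * α := by
          congr 1
          exact Finset.sum_congr rfl fun s _ => Real.sq_sqrt (mul_nonneg (hp.1 s) hα)
      _ = Fintype.card S * α := by rw [← Finset.sum_mul, hp.2, one_mul]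
  calc ∑ s, |p s - q s| ≤ ∑ s, (Real.sqrt (p s * α) + β) := Finset.sum_le_sum fun s _ => hpq s
    _ = ∑ s, Real.sqrt (p s * α) + Fintype.card S * β := by
        simp [Finset.sum_add_distrib]
    _ ≤ _ := by linarith

lemma abs_Eexp_sub_le {S : Type*} [Fintype S] {p x y d : S → ℝ} (hp : IsDist p)
    (h : ∀ s, |x s - y s| ≤ d s) : |Eexp p x - Eexp p y| ≤ Eexp p d := by
  simp only [Eexp, ← Finset.sum_sub_distrib]
  refine (Finset.abs_sum_le_sum_abs _ _).trans (Finset.sum_le_sum fun s _ => ?_)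
  rw [← mul_sub, abs_mul, abs_of_nonneg (hp.1 s)]
  exact mul_le_mul_of_nonneg_left (h s) (hp.1 s)

lemma abs_sq_sub_sq_le {H x y d : ℝ} (hx : 0 ≤ x ∧ x ≤ H) (hy : 0 ≤ y ∧ y ≤ H)
    (h : |x - y| ≤ d) : |x ^ 2 - y ^ 2| ≤ 2 * H * d := by
  rw [sq_sub_sq, abs_mul, abs_of_nonneg (add_nonneg hx.1 hy.1)]
  exact mul_le_mul (by linarith [hx.2, hy.2]) h (abs_nonneg _) (by linarith [hx.1, hx.2])

lemma abs_Varp_sub_le {S : Type*} [Fintype S] {H : ℝ} {p w v d : S → ℝ} (hp : IsDist p)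
    (hw : ∀ s, 0 ≤ w s ∧ w s ≤ H) (hv : ∀ s, 0 ≤ v s ∧ v s ≤ H)
    (h : ∀ s, |w s - v s| ≤ d s) : |Varp p w - Varp p v| ≤ 4 * H * Eexp p d := by
  have h1 := abs_sq_sub_sq_le (Eexp_mem_Icc hp hw) (Eexp_mem_Icc hp hv) (abs_Eexp_sub_le hp h)
  have h2 := abs_Eexp_sub_le hp fun s => abs_sq_sub_sq_le (hw s) (hv s) (h s)
  have h3 : Eexp p (fun s => 2 * H * d s) = 2 * H * Eexp p d := by
    simp only [Eexp, Finset.mul_sum]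
    exact Finset.sum_congr rfl fun s _ => by ring
  rw [h3] at h2
  rw [abs_le] at *
  unfold Varp
  constructor <;> linarith [h1.1, h1.2, h2.1, h2.2]

/-- **Variance analysis across two distributions.** If `|p(s) - q(s)| ≤ √(p(s)·α) + β`
for every `s`, and `0 ≤ g ≤ v ≤ f ≤ H` pointwise, then
`|Var_q[(f+g)/2] - Var_p[v]| ≤ 4H·E_p[f-g] + H²(√(S·α) + S·β)`, where `S = |S|`. -/
theorem variance_analysis_two_dists {S : Type*} [Fintype S] [Nonempty S]
    (H : ℝ) (hH : 0 ≤ H) (α β : ℝ) (hα : 0 ≤ α) (hβ : 0 ≤ β)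
    (p q : S → ℝ) (hp : IsDist p) (hq : IsDist q)
    (hpq : ∀ s, |p s - q s| ≤ Real.sqrt (p s * α) + β)
    (f g v : S → ℝ)
    (hfgv : ∀ s, 0 ≤ g s ∧ g s ≤ v s ∧ v s ≤ f s ∧ f s ≤ H) :
    |Varp q (fun s => (f s + g s) / 2) - Varp p v|
      ≤ 4 * H * Eexp p (fun s => f s - g s)
        + H ^ 2 * (Real.sqrt (Fintype.card S * α) + Fintype.card S * β) := by
  have hw : ∀ s, 0 ≤ (f s + g s) / 2 ∧ (f s + g s) / 2 ≤ H := fun s => by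
    obtain ⟨h1, h2, h3, h4⟩ := hfgv s
    constructor <;> linarith
  have hv : ∀ s, 0 ≤ v s ∧ v s ≤ H := fun s => by
    obtain ⟨h1, h2, h3, h4⟩ := hfgv s
    constructor <;> linarith
  have hd : ∀ s, |(f s + g s) / 2 - v s| ≤ f s - g s := fun s => by
    obtain ⟨h1, h2, h3, h4⟩ := hfgv s
    rw [abs_le]
    constructor <;> linarith
  have hfun := abs_le.mp (abs_Varp_sub_le hp hw hv hd)
  have hdist := mul_le_mul_of_nonneg_left (sum_abs_sub_le hα hp hpq) (sq_nonneg H)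
  have hqp := Varp_sub_le hq hp hw
  have hpq' := Varp_sub_le hp hq hw
  simp only [abs_sub_comm (q _) (p _)] at hqp
  rw [abs_le]
  constructor <;> linarith [hfun.1, hfun.2]
end

section
/- (Bernstein-style perturbation bound for the dual robust expectation, with a covering argument.) Let S be a finite set with |S| = S ≥ 2, K ≥ 1 an integer, H ≥ 0 a real number, ρ ∈ [0,1), α, β ≥ 0, and V : S → [0, H]. Let 𝒩 ⊆ [0, H] be a finite set such that every η ∈ [0, H] is within distance 1/(S·sqrt(K)) of some point of 𝒩. Let p, q ∈ Δ(S) be such that for every η ∈ 𝒩: | E_p[(η − V)_+] − E_q[(η − V)_+] | ≤ sqrt( Var_q[(η − V)_+]·α ) + β. Then, with the dual robust expectation 𝔻(r) := sup over η ∈ [0,H] of ( − E_r[(η − V)_+] + (1 − ρ/2)·η ), one has | 𝔻(p) − 𝔻(q) | ≤ sqrt( Var_q[V]·α ) + β + 1/sqrt(K). -/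
/-!
The suprema defining `𝔻(p)` and `𝔻(q)` differ by at most the uniform distance of their
objectives, i.e. by `sup_η |E_p[(η - V)_+] - E_q[(η - V)_+]|` (`dualExp_le_add`). Moving `η` to
the nearest net point `η'` changes each of the two expectations by at most
`|η - η'| ≤ 1/(S√K)` (`abs_Eexp_posPart_sub_le`), in total at most `2/(S√K) ≤ 1/√K` since
`S ≥ 2`. At `η'` the Bernstein bound applies, and `Var_q[(η' - V)_+] ≤ Var_q[V]`
because `v ↦ (η' - v)_+` is `1`-Lipschitz (`Varp_posPart_le`).
-/

open Finset

section Defs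

variable {S : Type*} [Fintype S]

/-- The dual robust expectation
`𝔻(r) := sup_{η ∈ [0,H]} ( -E_r[(η - V)_+] + (1 - ρ/2)·η )`. -/
noncomputable def dualExp (H ρ : ℝ) (V : S → ℝ) (r : S → ℝ) : ℝ :=
  sSup {x : ℝ | ∃ η ∈ Set.Icc (0 : ℝ) H,
    x = -Eexp r (fun s => max (η - V s) 0) + (1 - ρ / 2) * η}

end Defs

section Helpers

variable {S : Type*} [Fintype S]

lemma Eexp_mono {r f g : S → ℝ} (hr : IsDist r) (h : ∀ s, f s ≤ g s) : Eexp r f ≤ Eexp r g :=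
  Finset.sum_le_sum fun s _ => mul_le_mul_of_nonneg_left (h s) (hr.1 s)

lemma Eexp_add_const {r : S → ℝ} (hr : IsDist r) (f : S → ℝ) (c : ℝ) :
    Eexp r (fun s => f s + c) = Eexp r f + c := by
  simp only [Eexp, mul_add, Finset.sum_add_distrib, ← Finset.sum_mul, hr.2, one_mul]

/-- Bias-variance decomposition of the mean squared deviation from a constant `c`. -/
lemma Eexp_sq_sub_const {r : S → ℝ} (hr : IsDist r) (f : S → ℝ) (c : ℝ) :
    Eexp r (fun s => (f s - c) ^ 2) = Varp r f + (Eexp r f - c) ^ 2 := by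
  have h : Eexp r (fun s => (f s - c) ^ 2)
      = Eexp r (fun s => (f s) ^ 2) - 2 * c * Eexp r f + c ^ 2 * ∑ s, r s := by
    simp only [Eexp, Finset.mul_sum, ← Finset.sum_sub_distrib, ← Finset.sum_add_distrib]
    exact Finset.sum_congr rfl fun s _ => by ring
  rw [h, hr.2, Varp]
  ring

lemma abs_posPart_sub_le (a b : ℝ) : |max a 0 - max b 0| ≤ |a - b| :=
  abs_max_sub_max_le_abs a b 0

/-- Replacing `V` by its image under the `1`-Lipschitz map `v ↦ (η - v)_+` cannot increase the
variance: compare mean squared deviations from `(η - E V)_+` and from `E V`. -/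
lemma Varp_posPart_le {r : S → ℝ} (hr : IsDist r) (V : S → ℝ) (η : ℝ) :
    Varp r (fun s => max (η - V s) 0) ≤ Varp r V := by
  have h1 := Eexp_sq_sub_const hr (fun s => max (η - V s) 0) (max (η - Eexp r V) 0)
  have h2 := Eexp_sq_sub_const hr V (Eexp r V)
  have h3 : Eexp r (fun s => (max (η - V s) 0 - max (η - Eexp r V) 0) ^ 2)
      ≤ Eexp r (fun s => (V s - Eexp r V) ^ 2) := by
    refine Eexp_mono hr fun s => sq_le_sq.mpr ?_
    refine (abs_posPart_sub_le _ _).trans_eq ?_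
    rw [sub_sub_sub_cancel_left, abs_sub_comm]
  have h4 := sq_nonneg (Eexp r (fun s => max (η - V s) 0) - max (η - Eexp r V) 0)
  rw [sub_self] at h2
  linarith

lemma abs_Eexp_posPart_sub_le {r : S → ℝ} (hr : IsDist r) (V : S → ℝ) (η η' : ℝ) :
    |Eexp r (fun s => max (η - V s) 0) - Eexp r (fun s => max (η' - V s) 0)| ≤ |η - η'| := by
  have key : ∀ a b : ℝ, Eexp r (fun s => max (a - V s) 0)
      ≤ Eexp r (fun s => max (b - V s) 0) + |a - b| := by
    intro a b
    rw [← Eexp_add_const hr]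
    refine Eexp_mono hr fun s => ?_
    have h := (le_abs_self _).trans (abs_posPart_sub_le (a - V s) (b - V s))
    rw [sub_sub_sub_cancel_right] at h
    linarith
  have h1 := key η η'
  have h2 := key η' η
  rw [abs_sub_comm η' η] at h2
  exact abs_le.mpr ⟨by linarith, by linarith⟩

lemma dualExp_le_add {H ρ C : ℝ} (hH : 0 ≤ H) (hρ0 : 0 ≤ ρ) {V p q : S → ℝ} (hq : IsDist q)
    (h : ∀ η ∈ Set.Icc (0 : ℝ) H, Eexp q (fun s => max (η - V s) 0)
      ≤ Eexp p (fun s => max (η - V s) 0) + C) :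
    dualExp H ρ V p ≤ dualExp H ρ V q + C := by
  have hbdd : BddAbove {x : ℝ | ∃ η ∈ Set.Icc (0 : ℝ) H,
      x = -Eexp q (fun s => max (η - V s) 0) + (1 - ρ / 2) * η} := by
    refine ⟨H, ?_⟩
    rintro x ⟨η, hη, rfl⟩
    have h0 : 0 ≤ Eexp q (fun s => max (η - V s) 0) :=
      Finset.sum_nonneg fun s _ => mul_nonneg (hq.1 s) (le_max_right _ _)
    nlinarith [mul_nonneg hρ0 hη.1, hη.2]
  refine csSup_le ⟨_, 0, ⟨le_rfl, hH⟩, rfl⟩ ?_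
  rintro x ⟨η, hη, rfl⟩
  have h1 : -Eexp q (fun s => max (η - V s) 0) + (1 - ρ / 2) * η ≤ dualExp H ρ V q :=
    le_csSup hbdd ⟨η, hη, rfl⟩
  linarith [h η hη]

end Helpers

/-- **Bernstein-style perturbation bound for the dual robust expectation, with a covering
argument.** If `𝒩 ⊆ [0,H]` is a `1/(S√K)`-net of `[0,H]` and the Bernstein bound
`|E_p[(η-V)_+] - E_q[(η-V)_+]| ≤ √(Var_q[(η-V)_+]·α) + β` holds for all `η ∈ 𝒩`, then
`|𝔻(p) - 𝔻(q)| ≤ √(Var_q[V]·α) + β + 1/√K`. -/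
theorem dualExp_bernstein_cover {S : Type*} [Fintype S] [Nonempty S]
    (hS : 2 ≤ Fintype.card S) (K : ℕ) (hK : 1 ≤ K)
    (H : ℝ) (hH : 0 ≤ H) (ρ : ℝ) (hρ0 : 0 ≤ ρ) (hρ1 : ρ < 1)
    (α β : ℝ) (hα : 0 ≤ α) (hβ : 0 ≤ β)
    (V : S → ℝ) (hV : ∀ s, 0 ≤ V s ∧ V s ≤ H)
    (𝒩 : Finset ℝ) (h𝒩sub : ∀ η ∈ 𝒩, η ∈ Set.Icc (0 : ℝ) H)
    (h𝒩net : ∀ η ∈ Set.Icc (0 : ℝ) H, ∃ η' ∈ 𝒩,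
      |η - η'| ≤ 1 / ((Fintype.card S : ℝ) * Real.sqrt K))
    (p q : S → ℝ) (hp : IsDist p) (hq : IsDist q)
    (hconc : ∀ η ∈ 𝒩,
      |Eexp p (fun s => max (η - V s) 0) - Eexp q (fun s => max (η - V s) 0)|
        ≤ Real.sqrt (Varp q (fun s => max (η - V s) 0) * α) + β) :
    |dualExp H ρ V p - dualExp H ρ V q|
      ≤ Real.sqrt (Varp q V * α) + β + 1 / Real.sqrt K := by
  have hK0 : 0 < Real.sqrt K := Real.sqrt_pos.mpr (by exact_mod_cast hK)
  have hδ : 2 * (1 / ((Fintype.card S : ℝ) * Real.sqrt K)) ≤ 1 / Real.sqrt K := by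
    have hS' : (2 : ℝ) ≤ Fintype.card S := by exact_mod_cast hS
    rw [mul_one_div, div_le_div_iff₀ (by positivity) hK0]
    nlinarith
  have key : ∀ η ∈ Set.Icc (0 : ℝ) H,
      |Eexp p (fun s => max (η - V s) 0) - Eexp q (fun s => max (η - V s) 0)|
        ≤ Real.sqrt (Varp q V * α) + β + 1 / Real.sqrt K := by
    intro η hη
    obtain ⟨η', hη', hd⟩ := h𝒩net η hη
    have h1 := abs_le.mp (abs_Eexp_posPart_sub_le hp V η η')
    have h2 := abs_le.mp (abs_Eexp_posPart_sub_le hq V η η')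
    have h3 := abs_le.mp (hconc η' hη')
    have h4 := Real.sqrt_le_sqrt (mul_le_mul_of_nonneg_right (Varp_posPart_le hq V η') hα)
    exact abs_le.mpr ⟨by linarith, by linarith⟩
  have hpq : dualExp H ρ V p
      ≤ dualExp H ρ V q + (Real.sqrt (Varp q V * α) + β + 1 / Real.sqrt K) :=
    dualExp_le_add hH hρ0 hq fun η hη => by linarith [(abs_le.mp (key η hη)).1]
  have hqp : dualExp H ρ V q
      ≤ dualExp H ρ V p + (Real.sqrt (Varp q V * α) + β + 1 / Real.sqrt K) :=
    dualExp_le_add hH hρ0 hp fun η hη => by linarith [(abs_le.mp (key η hη)).2]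
  exact abs_le.mpr ⟨by linarith, by linarith⟩
end
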